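/- arXiv:2502.02826 — 2 statements merged into one kernel-verified Lean document; each statement's English description precedes it below -/
import Mathlib

section
/- For a complete multipartite graph Γ with parts V₁,…,V_m and any n ≥ 1, the minimum number of forests covering the edges of the multigraph n∗Γ (each edge replaced by n parallel edges) equals ⌈ n·|E(Γ)| / (|V(Γ)|−1) ⌉. -/
open SimpleGraph

variable {V : Type*}

/-- `G` is a complete multipartite graph: there is an equivalence relation (whose classes are
the parts `V₁, …, Vₘ`, independent sets) such that two vertices are adjacent iff they are
inequivalent. -/
def IsCompleteMultipartite' (G : SimpleGraph V) : Prop :=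
  ∃ r : Setoid V, ∀ u v : V, G.Adj u v ↔ ¬ r.r u v

/-! By Nash-Williams' theorem, the multigraph `n∗Γ` is covered by `t` forests iff
`n * |E(Γ[X])| ≤ t * (|X| - 1)` for every set `X` of vertices, so it suffices to show that
`|E(Γ[X])| / (|X| - 1)` can only grow when a vertex `v` is added to `X`. Every edge of a complete
multipartite graph has an end adjacent to `v`; if `v` has `d` neighbours in `X`, this gives
`|E(Γ[X])| ≤ d * (|X| - 1)`, hence `|E(Γ[X])| / (|X| - 1) ≤ (|E(Γ[X])| + d) / |X|`.

Nash-Williams' theorem itself is the matroid covering theorem for the linear matroid of the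
incidence vectors of the edges over `ZMod 2`, in which the independent sets are the forests. The
matroid covering theorem is an instance of Rado's theorem: a transversal assigns `n` of the `t`
colors to each element in such a way that each color class is independent. -/

section Polymatroid

variable {α ι κ : Type*} {f : Finset α → ℕ}

/-- The rank function of an integral polymatroid on `α`: normalized, monotone and submodular.
The unit increase axiom of a matroid rank function is not included; it is the extra condition
`f A ≤ #A`. -/
structure IsPolymatroidRank [DecidableEq α] (f : Finset α → ℕ) : Prop where
  empty : f ∅ = 0
  mono : Monotone f
  union_add_inter_le : ∀ A B, f (A ∪ B) + f (A ∩ B) ≤ f A + f B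

namespace IsPolymatroidRank

variable [DecidableEq α]

lemma sum {s : Finset κ} {g : κ → Finset α → ℕ} (hg : ∀ k ∈ s, IsPolymatroidRank (g k)) :
    IsPolymatroidRank fun A => ∑ k ∈ s, g k A where
  empty := Finset.sum_eq_zero fun k hk => (hg k hk).empty
  mono _ _ hAB := Finset.sum_le_sum fun k hk => (hg k hk).mono hAB
  union_add_inter_le A B := by
    simp only [← Finset.sum_add_distrib]
    exact Finset.sum_le_sum fun k hk => (hg k hk).union_add_inter_le A B

lemma preimage {β : Type*} [DecidableEq β] (hf : IsPolymatroidRank f) {g : α → β}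
    (hg : Function.Injective g) :
    IsPolymatroidRank fun A : Finset β => f (A.preimage g hg.injOn) where
  empty := by rw [Finset.preimage_empty, hf.empty]
  mono _ _ hAB := hf.mono (Finset.monotone_preimage hg hAB)
  union_add_inter_le A B := by
    classical
    simpa only [Finset.preimage_union, Finset.preimage_inter hg.injOn hg.injOn]
      using hf.union_add_inter_le (A.preimage g hg.injOn) (B.preimage g hg.injOn)

lemma exists_mem_forall_card_le_update_erase [DecidableEq ι] (hf : IsPolymatroidRank f)
    {A : ι → Finset α} (hA : ∀ J : Finset ι, J.card ≤ f (J.biUnion A)) {i : ι}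
    (hi : 1 < (A i).card) :
    ∃ x ∈ A i, ∀ J : Finset ι,
      J.card ≤ f (J.biUnion (Function.update A i ((A i).erase x))) := by
  -- If deleting `x` violates the condition at `J` and deleting `y` violates it at `K`, then
  -- submodularity contradicts the condition at `J ∪ K` and `(J ∩ K).erase i`.
  obtain ⟨x, hx, y, hy, hxy⟩ := Finset.one_lt_card.1 hi
  by_contra! hbad
  have mem_of_lt {z : α} {J : Finset ι}
      (h : f (J.biUnion (Function.update A i ((A i).erase z))) < J.card) : i ∈ J := by
    by_contra hiJ
    refine h.not_ge ?_
    have hunchanged (j : ι) (hj : j ∈ J) : Function.update A i ((A i).erase z) j = A j :=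
      Function.update_of_ne (ne_of_mem_of_not_mem hj hiJ) _ _
    rw [Finset.biUnion_congr rfl hunchanged]
    exact hA J
  obtain ⟨J, hJ⟩ := hbad x hx
  obtain ⟨K, hK⟩ := hbad y hy
  set P := J.biUnion (Function.update A i ((A i).erase x)) with hP
  set Q := K.biUnion (Function.update A i ((A i).erase y)) with hQ
  have hiJK : i ∈ J ∩ K := Finset.mem_inter.2 ⟨mem_of_lt hJ, mem_of_lt hK⟩
  have hunion : (J ∪ K).biUnion A ⊆ P ∪ Q := by
    intro a ha
    simp only [hP, hQ, Finset.mem_union, Finset.mem_biUnion, Function.update_apply] at ha ⊢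
    grind
  have hinter : ((J ∩ K).erase i).biUnion A ⊆ P ∩ Q := by
    intro a ha
    simp only [hP, hQ, Finset.mem_inter, Finset.mem_erase, Finset.mem_biUnion,
      Function.update_apply] at ha ⊢
    grind
  have hunion_card := (hA _).trans (hf.mono hunion)
  have hinter_card := (hA _).trans (hf.mono hinter)
  have hsub := hf.union_add_inter_le P Q
  have hcard := Finset.card_union_add_card_inter J K
  have hpos := Finset.card_pos.2 ⟨i, hiJK⟩
  rw [Finset.card_erase_of_mem hiJK] at hinter_card
  lia

/-- **Rado's theorem**, in Welsh's version for polymatroids. -/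
theorem exists_transversal [Finite ι] (hf : IsPolymatroidRank f) (A : ι → Finset α)
    (hA : ∀ J : Finset ι, J.card ≤ f (J.biUnion A)) :
    ∃ x : ι → α, (∀ i, x i ∈ A i) ∧ ∀ J : Finset ι, J.card ≤ f (J.image x) := by
  classical
  have := Fintype.ofFinite ι
  induction hN : ∑ i, (A i).card using Nat.strong_induction_on generalizing A with | _ N ih
  by_cases hsmall : ∀ i, (A i).card ≤ 1
  · have hsingleton (i : ι) : ∃ a, A i = {a} := by
      rw [← Finset.card_eq_one]
      refine (hsmall i).antisymm (Finset.card_pos.2 ?_)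
      by_contra hempty
      simpa [Finset.not_nonempty_iff_eq_empty.1 hempty, hf.empty] using hA {i}
    choose x hx using hsingleton
    refine ⟨x, fun i => by simp [hx], fun J => ?_⟩
    rw [← Finset.biUnion_singleton, ← funext hx]
    exact hA J
  · push Not at hsmall
    obtain ⟨i, hi⟩ := hsmall
    obtain ⟨a, ha, hA'⟩ := hf.exists_mem_forall_card_le_update_erase hA hi
    have hsub (j : ι) : Function.update A i ((A i).erase a) j ⊆ A j := by
      obtain rfl | hj := eq_or_ne j i
      · simpa only [Function.update_self] using Finset.erase_subset a _
      · rw [Function.update_of_ne hj]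
    have hlt : ∑ j, (Function.update A i ((A i).erase a) j).card < N := by
      rw [← hN]
      refine Finset.sum_lt_sum (fun j _ => Finset.card_le_card (hsub j)) ⟨i, Finset.mem_univ i, ?_⟩
      simpa only [Function.update_self] using Finset.card_erase_lt_of_mem ha
    obtain ⟨x, hx, hxJ⟩ := ih _ hlt _ hA' rfl
    exact ⟨x, fun j => hsub j (hx j), hxJ⟩

theorem exists_independent_transversal [Fintype ι] (hf : IsPolymatroidRank f)
    (hcard : ∀ B, f B ≤ B.card) (A : ι → Finset α)
    (hA : ∀ J : Finset ι, J.card ≤ f (J.biUnion A)) :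
    ∃ x : ι → α, Function.Injective x ∧ (∀ i, x i ∈ A i) ∧
      f (Finset.univ.image x) = (Finset.univ.image x).card := by
  obtain ⟨x, hx, hxJ⟩ := hf.exists_transversal A hA
  have hle : (Finset.univ.image x).card ≤ Finset.univ.card := Finset.card_image_le
  have hrank := hxJ Finset.univ
  refine ⟨x, ?_, hx, (hcard _).antisymm (hle.trans hrank)⟩
  rw [← Set.injOn_univ, ← Finset.coe_univ, ← Finset.card_image_iff]
  exact hle.antisymm (hrank.trans (hcard _))

end IsPolymatroidRank

/-- The elements of `A` of color `k`, for a set `A` of colored elements of `α`. -/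
noncomputable def colorSlice (k : κ) (A : Finset (α × κ)) : Finset α :=
  A.preimage (·, k) (Prod.mk_left_injective k).injOn

@[simp]
lemma mem_colorSlice {k : κ} {A : Finset (α × κ)} {a : α} : a ∈ colorSlice k A ↔ (a, k) ∈ A :=
  Finset.mem_preimage

lemma sum_card_colorSlice [Fintype κ] (A : Finset (α × κ)) :
    ∑ k, (colorSlice k A).card = A.card := by
  classical
  rw [Finset.card_eq_sum_card_fiberwise (f := Prod.snd) (t := Finset.univ) (by simp)]
  refine Finset.sum_congr rfl fun k _ => ?_
  rw [← Finset.card_image_of_injective _ (Prod.mk_left_injective k)]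
  congr 1
  ext ⟨a, l⟩
  simp only [Finset.mem_image, mem_colorSlice, Finset.mem_filter, Prod.mk.injEq]
  grind

/-- Edmonds' matroid covering theorem, with multiplicities. -/
theorem IsPolymatroidRank.exists_cover [DecidableEq α] (hf : IsPolymatroidRank f)
    (hcard : ∀ A, f A ≤ A.card) {E : Finset α} {n t : ℕ}
    (h : ∀ A ⊆ E, n * A.card ≤ t * f A) :
    ∃ F : Fin t → Finset α, (∀ i, F i ⊆ E ∧ f (F i) = (F i).card) ∧
      ∀ a ∈ E, n ≤ {i : Fin t | a ∈ F i}.ncard := by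
  classical
  -- A transversal of the sets `{a} × Fin t`, one for each copy of each `a ∈ E`, assigns distinct
  -- colors to the copies of `a`; independence for the sum of the ranks of the color classes means
  -- that every class is independent.
  let A (p : E × Fin n) : Finset (α × Fin t) := {p.1.1} ×ˢ Finset.univ
  have hrank : IsPolymatroidRank fun X : Finset (α × Fin t) => ∑ k, f (colorSlice k X) :=
    .sum fun k _ => hf.preimage (Prod.mk_left_injective k)
  have hA (J : Finset (E × Fin n)) : J.card ≤ ∑ k, f (colorSlice k (J.biUnion A)) := by
    set B : Finset α := (J.image Prod.fst).map (.subtype _) with hB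
    have hslice (k : Fin t) : colorSlice k (J.biUnion A) = B := by
      ext a
      simp [A, hB, eq_comm]
    calc J.card ≤ (J.image Prod.fst ×ˢ (Finset.univ : Finset (Fin n))).card :=
          Finset.card_le_card fun p hp =>
            Finset.mk_mem_product (Finset.mem_image_of_mem _ hp) (Finset.mem_univ p.2)
      _ = n * B.card := by
          rw [Finset.card_product, Finset.card_fin, Finset.card_map, mul_comm]
      _ ≤ t * f B := h B (Finset.map_subtype_subset _)
      _ = _ := by simp only [hslice, Finset.sum_const, Finset.card_fin, smul_eq_mul]
  obtain ⟨x, hx_inj, hx, hxrank⟩ := hrank.exists_independent_transversal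
    (fun X => (Finset.sum_le_sum fun k _ => hcard _).trans_eq (sum_card_colorSlice X)) A hA
  have hx_fst (p : E × Fin n) : (x p).1 = p.1 :=
    Finset.mem_singleton.1 (Finset.mem_product.1 (hx p)).1
  rw [← sum_card_colorSlice, Finset.sum_eq_sum_iff_of_le fun k _ => hcard _] at hxrank
  refine ⟨fun k => colorSlice k (Finset.univ.image x),
    fun k => ⟨fun a ha => ?_, hxrank k (Finset.mem_univ k)⟩, fun a ha => ?_⟩
  · obtain ⟨p, -, hp⟩ := Finset.mem_image.1 (mem_colorSlice.1 ha)
    have ha_eq : p.1 = a := by rw [← hx_fst, hp]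
    exact ha_eq ▸ p.1.2
  · let color (j : Fin n) : Fin t := (x (⟨a, ha⟩, j)).2
    have hx_eq (j : Fin n) : x (⟨a, ha⟩, j) = (a, color j) := Prod.ext (hx_fst _) rfl
    have hcolor : Function.Injective color := fun j j' hjj' =>
      (Prod.ext_iff.1 (hx_inj ((hx_eq j).trans (hjj' ▸ (hx_eq j').symm)))).2
    have hmem (j : Fin n) : a ∈ colorSlice (color j) (Finset.univ.image x) :=
      mem_colorSlice.2 (hx_eq j ▸ Finset.mem_image_of_mem x (Finset.mem_univ _))
    calc n = (Set.range color).ncard := by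
          rw [Set.ncard_range_of_injective hcolor, Nat.card_fin]
      _ ≤ _ := Set.ncard_le_ncard (Set.range_subset_iff.2 hmem)

end Polymatroid

section LinearRank

variable {K M α : Type*} [DivisionRing K] [AddCommGroup M] [Module K M]

lemma isPolymatroidRank_finrank_image [DecidableEq α] (v : α → M) :
    IsPolymatroidRank fun A : Finset α => Set.finrank K (v '' A) where
  empty := by rw [Finset.coe_empty, Set.image_empty, Set.finrank_empty]
  mono A B hAB := by
    have := FiniteDimensional.span_of_finite K (B.finite_toSet.image v)
    exact Submodule.finrank_mono (Submodule.span_mono (Set.image_mono hAB))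
  union_add_inter_le A B := by
    have := FiniteDimensional.span_of_finite K (A.finite_toSet.image v)
    have := FiniteDimensional.span_of_finite K (B.finite_toSet.image v)
    have hinter : Submodule.span K (v '' (A ∩ B : Set α)) ≤
        Submodule.span K (v '' A) ⊓ Submodule.span K (v '' B) :=
      le_inf (Submodule.span_mono (Set.image_mono Set.inter_subset_left))
        (Submodule.span_mono (Set.image_mono Set.inter_subset_right))
    rw [Finset.coe_union, Finset.coe_inter, Set.image_union]
    simp only [Set.finrank]
    rw [Submodule.span_union,
      ← Submodule.finrank_sup_add_finrank_inf_eq (.span K (v '' A)) (.span K (v '' B))]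
    exact Nat.add_le_add_left (Submodule.finrank_mono hinter) _

lemma finrank_image_le_card (v : α → M) (A : Finset α) : Set.finrank K (v '' A) ≤ A.card := by
  classical
  rw [← Finset.coe_image]
  exact (finrank_span_finset_le_card _).trans Finset.card_image_le

lemma linearIndepOn_iff_finrank_image_eq_card {v : α → M} {A : Finset α} :
    LinearIndepOn K v A ↔ Set.finrank K (v '' A) = A.card := by
  rw [LinearIndepOn, linearIndependent_iff_card_eq_finrank_span, eq_comm, Set.image_eq_range,
    ← Fintype.card_coe]
  rfl

end LinearRank

section EdgeVector

variable [DecidableEq V]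

/-- The incidence vector over `ZMod 2` of an unordered pair of vertices, that is, its column in the
vertex-edge incidence matrix. These vectors represent the graphic matroid. A pair `s(v, v)` is sent
to `0`. -/
def edgeVector : Sym2 V → V → ZMod 2 :=
  Sym2.lift ⟨fun u v => Pi.single u 1 + Pi.single v 1, fun _ _ => add_comm _ _⟩

lemma edgeVector_mem_span_of_reachable {H : SimpleGraph V} {u v : V} (h : H.Reachable u v) :
    edgeVector s(u, v) ∈ Submodule.span (ZMod 2) (edgeVector '' H.edgeSet) := by
  obtain ⟨p⟩ := h
  induction p with
  | @nil u =>
    have hloop : edgeVector s(u, u) = 0 := ZModModule.add_self _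
    exact hloop ▸ zero_mem _
  | @cons u v w huv _ ih =>
    have htelescope : edgeVector s(u, v) + edgeVector s(v, w) = edgeVector s(u, w) :=
      ZModModule.add_add_add_cancel _ _ _
    rw [← htelescope]
    exact add_mem (Submodule.subset_span (Set.mem_image_of_mem _ huv)) ih

lemma isAcyclic_fromEdgeSet_of_linearIndepOn {S : Set (Sym2 V)}
    (hS : LinearIndepOn (ZMod 2) edgeVector S) : (fromEdgeSet S).IsAcyclic := by
  rw [isAcyclic_iff_forall_isBridge]
  rintro ⟨u, v⟩ he
  rw [isBridge_iff]
  intro hreach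
  have hsub : ((fromEdgeSet S).deleteEdges {s(u, v)}).edgeSet ⊆ S \ {s(u, v)} := by
    simp only [edgeSet_deleteEdges, edgeSet_fromEdgeSet]
    exact Set.sdiff_subset_sdiff_left Set.sdiff_subset
  have heS : s(u, v) ∈ S := ((edgeSet_fromEdgeSet S).subset he).1
  exact linearIndepOn_iff_notMem_span.1 hS _ heS
    (Submodule.span_mono (Set.image_mono hsub) (edgeVector_mem_span_of_reachable hreach))

lemma card_le_finrank_edgeVector_add_card_connectedComponent [Fintype V] (H : SimpleGraph V) :
    Fintype.card V ≤
      Set.finrank (ZMod 2) (edgeVector '' H.edgeSet) + Nat.card H.ConnectedComponent := by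
  have := Fintype.ofFinite H.ConnectedComponent
  let root (c : H.ConnectedComponent) : V → ZMod 2 := Pi.single c.out 1
  have htop : Submodule.span (ZMod 2) (edgeVector '' H.edgeSet) ⊔
      Submodule.span (ZMod 2) (Set.range root) = ⊤ := by
    rw [eq_top_iff, ← (Pi.basisFun (ZMod 2) V).span_eq, Submodule.span_le]
    rintro _ ⟨w, rfl⟩
    set c := H.connectedComponentMk w
    have hreach : H.Reachable w c.out := ConnectedComponent.exact (Quot.out_eq c).symm
    have hbasis : Pi.basisFun (ZMod 2) V w = edgeVector s(w, c.out) + root c := by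
      simp [edgeVector, root, add_assoc, ZModModule.add_self]
    rw [hbasis]
    exact Submodule.add_mem_sup (edgeVector_mem_span_of_reachable hreach)
      (Submodule.subset_span (Set.mem_range_self c))
  calc Fintype.card V = Module.finrank (ZMod 2) (V → ZMod 2) :=
        (Module.finrank_fintype_fun_eq_card _).symm
    _ = Set.finrank (ZMod 2) (edgeVector '' H.edgeSet ∪ Set.range root) := by
        rw [Set.finrank, Submodule.span_union, htop, finrank_top]
    _ ≤ Set.finrank (ZMod 2) (edgeVector '' H.edgeSet) + Set.finrank (ZMod 2) (Set.range root) := by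
        rw [Set.finrank, Submodule.span_union]
        exact Submodule.finrank_add_le_finrank_add_finrank _ _
    _ ≤ _ := by
        rw [Nat.card_eq_fintype_card]
        gcongr
        exact finrank_range_le_card root

end EdgeVector

section EdgesWithin

variable {G : SimpleGraph V} {X : Finset V}

open Classical in
/-- The edges of `G` with both ends in `X`, that is, `E(G[X])` as a set of edges of `G`. -/
noncomputable def edgesWithin (G : SimpleGraph V) (X : Finset V) : Finset (Sym2 V) :=
  {e ∈ X.sym2 | e ∈ G.edgeSet}

lemma mem_edgesWithin {e : Sym2 V} : e ∈ edgesWithin G X ↔ e ∈ G.edgeSet ∧ ∀ v ∈ e, v ∈ X := by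
  simp only [edgesWithin, Finset.mem_filter, Finset.mem_sym2_iff, and_comm]

lemma mk_mem_edgesWithin {u v : V} : s(u, v) ∈ edgesWithin G X ↔ G.Adj u v ∧ u ∈ X ∧ v ∈ X := by
  rw [mem_edgesWithin, mem_edgeSet, Sym2.ball]

@[simp]
lemma coe_edgesWithin_univ [Fintype V] (G : SimpleGraph V) :
    (edgesWithin G Finset.univ : Set (Sym2 V)) = G.edgeSet := by
  ext e
  simp [mem_edgesWithin]

lemma edgesWithin_eq_map_induce [Fintype (G.induce (X : Set V)).edgeSet] :
    edgesWithin G X = (G.induce (X : Set V)).edgeFinset.map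
      (Function.Embedding.subtype (· ∈ (X : Set V))).sym2Map := by
  ext ⟨u, v⟩
  simp only [mk_mem_edgesWithin, Finset.mem_map, mem_edgeFinset, Sym2.exists, mem_edgeSet,
    comap_adj, Function.Embedding.sym2Map_apply, Function.Embedding.coe_subtype, Sym2.map_mk,
    Sym2.eq_iff, Subtype.exists]
  grind [adj_comm]

lemma edgesWithin_eq_empty_of_card_le_one (hX : X.card ≤ 1) : edgesWithin G X = ∅ := by
  refine Finset.eq_empty_of_forall_notMem fun e => ?_
  induction e with | _ u v
  rw [mk_mem_edgesWithin]
  exact fun ⟨hadj, hu, hv⟩ => hadj.ne (Finset.card_le_one.1 hX u hu v hv)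

lemma card_edgeFinset_lt_card_of_isAcyclic [Fintype V] [Nonempty V] [Fintype G.edgeSet]
    (hG : G.IsAcyclic) : G.edgeFinset.card < Fintype.card V := by
  classical
  obtain ⟨T, hGT, -, hT⟩ := connected_top.exists_isTree_le_of_le_of_isAcyclic le_top hG
  rw [← hT.card_edgeFinset, Nat.lt_succ_iff]
  exact Finset.card_le_card (edgeFinset_mono hGT)

lemma card_edgesWithin_le_of_isAcyclic (hG : G.IsAcyclic) (X : Finset V) :
    (edgesWithin G X).card ≤ X.card - 1 := by
  classical
  obtain rfl | hX := X.eq_empty_or_nonempty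
  · rw [edgesWithin_eq_empty_of_card_le_one (by simp)]
    simp
  · have : Nonempty (X : Set V) := hX.coe_sort
    rw [edgesWithin_eq_map_induce, Finset.card_map]
    refine Nat.le_sub_one_of_lt ?_
    simpa using card_edgeFinset_lt_card_of_isAcyclic (hG.induce (X : Set V))

end EdgesWithin

section NashWilliams

variable {G : SimpleGraph V} {n t : ℕ}

/-- The multigraph obtained from `G` by taking each edge `n` times is covered by `t` forests. A
forest uses at most one of the parallel copies of an edge, so this is expressed by `t` forests of
`G` that cover each edge of `G` at least `n` times. -/
def HasForestCover (G : SimpleGraph V) (n t : ℕ) : Prop :=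
  ∃ F : Fin t → Set (Sym2 V),
    (∀ i, F i ⊆ G.edgeSet ∧ (fromEdgeSet (F i)).IsAcyclic) ∧
      ∀ e ∈ G.edgeSet, n ≤ {i : Fin t | e ∈ F i}.ncard

lemma HasForestCover.mul_card_edgesWithin_le (h : HasForestCover G n t) (X : Finset V) :
    n * (edgesWithin G X).card ≤ t * (X.card - 1) := by
  classical
  obtain ⟨F, hF, hcover⟩ := h
  rw [mul_comm, ← Finset.card_fin t]
  refine Finset.card_mul_le_card_mul (fun e i => e ∈ F i) (fun e he => ?_) fun i _ => ?_
  · simpa [Finset.bipartiteAbove, Set.ncard_eq_toFinset_card']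
      using hcover e (mem_edgesWithin.1 he).1
  · refine (Finset.card_le_card fun e he => ?_).trans
      (card_edgesWithin_le_of_isAcyclic (hF i).2 X)
    obtain ⟨heX, heF⟩ := (Finset.mem_bipartiteBelow _).1 he
    have hdiag := G.not_isDiag_of_mem_edgeSet ((hF i).1 heF)
    exact mem_edgesWithin.2
      ⟨(edgeSet_fromEdgeSet (F i)).superset ⟨heF, hdiag⟩, (mem_edgesWithin.1 heX).2⟩

variable [Finite V]

lemma mul_card_le_mul_finrank_edgeVector [DecidableEq V]
    (h : ∀ X : Finset V, n * (edgesWithin G X).card ≤ t * (X.card - 1))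
    {H : SimpleGraph V} [Fintype H.edgeSet] (hH : H ≤ G) :
    n * H.edgeFinset.card ≤ t * Set.finrank (ZMod 2) (edgeVector '' H.edgeSet) := by
  classical
  have := Fintype.ofFinite V
  let X (c : H.ConnectedComponent) : Finset V := {v | H.connectedComponentMk v = c}
  have hX_pos (c : H.ConnectedComponent) : 1 ≤ (X c).card := by
    induction c using ConnectedComponent.ind with | _ v
    exact Finset.card_pos.2 ⟨v, by simp [X]⟩
  have hedges : H.edgeFinset.card ≤ ∑ c, (edgesWithin G (X c)).card := by
    refine (Finset.card_le_card fun e he => ?_).trans Finset.card_biUnion_le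
    induction e with | _ u v
    have hadj : H.Adj u v := mem_edgeFinset.1 he
    refine Finset.mem_biUnion.2 ⟨H.connectedComponentMk u, Finset.mem_univ _, ?_⟩
    simpa [mk_mem_edgesWithin, X] using ⟨hH hadj, hadj.symm.reachable⟩
  have hvertices : ∑ c, ((X c).card - 1) + Nat.card H.ConnectedComponent = Fintype.card V := by
    rw [← Finset.card_univ, Finset.card_eq_sum_card_fiberwise (t := Finset.univ)
      fun v _ => Finset.mem_univ (H.connectedComponentMk v), Nat.card_eq_fintype_card,
      ← Finset.card_univ, Finset.card_eq_sum_ones, ← Finset.sum_add_distrib]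
    exact Finset.sum_congr rfl fun c _ => Nat.sub_add_cancel (hX_pos c)
  have hrank : ∑ c, ((X c).card - 1) ≤ Set.finrank (ZMod 2) (edgeVector '' H.edgeSet) := by
    have := card_le_finrank_edgeVector_add_card_connectedComponent H
    lia
  calc n * H.edgeFinset.card ≤ n * ∑ c, (edgesWithin G (X c)).card := by gcongr
    _ = ∑ c, n * (edgesWithin G (X c)).card := Finset.mul_sum ..
    _ ≤ ∑ c, t * ((X c).card - 1) := Finset.sum_le_sum fun c _ => h (X c)
    _ = t * ∑ c, ((X c).card - 1) := (Finset.mul_sum ..).symm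
    _ ≤ _ := by gcongr

/-- **Nash-Williams' theorem** for uniform edge multiplicities. -/
theorem hasForestCover_iff_mul_card_edgesWithin_le :
    HasForestCover G n t ↔
      ∀ X : Finset V, n * (edgesWithin G X).card ≤ t * (X.card - 1) := by
  classical
  have := Fintype.ofFinite V
  refine ⟨HasForestCover.mul_card_edgesWithin_le, fun h => ?_⟩
  have hrank (A : Finset (Sym2 V)) (hA : A ⊆ G.edgeFinset) :
      n * A.card ≤ t * Set.finrank (ZMod 2) (edgeVector '' (A : Set (Sym2 V))) := by
    have hedgeSet : (fromEdgeSet (A : Set (Sym2 V))).edgeSet = A := by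
      rw [edgeSet_fromEdgeSet, sdiff_eq_left, Set.disjoint_left]
      exact fun e he => G.not_isDiag_of_mem_edgeSet (mem_edgeFinset.1 (hA he))
    have hle : fromEdgeSet (A : Set (Sym2 V)) ≤ G := by
      rw [← edgeSet_subset_edgeSet, hedgeSet]
      exact fun e he => mem_edgeFinset.1 (hA he)
    simpa [edgeFinset, hedgeSet] using mul_card_le_mul_finrank_edgeVector h hle
  obtain ⟨F, hF, hcover⟩ := (isPolymatroidRank_finrank_image edgeVector).exists_cover
    (finrank_image_le_card edgeVector) hrank
  refine ⟨fun i => F i, fun i => ⟨fun e he => mem_edgeFinset.1 ((hF i).1 he), ?_⟩,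
    fun e he => hcover e (mem_edgeFinset.2 he)⟩
  exact isAcyclic_fromEdgeSet_of_linearIndepOn
    (linearIndepOn_iff_finrank_image_eq_card.2 (hF i).2)

end NashWilliams

section ForestDensity

variable {G : SimpleGraph V} {n t : ℕ}

/-- The quantity `|E(G[X])| / (|X| - 1)` maximized in Nash-Williams' formula. It is `0` if
`|X| ≤ 1`: there are no edges inside `X` then. -/
noncomputable def forestDensity (G : SimpleGraph V) (X : Finset V) : ℚ :=
  (edgesWithin G X).card / (X.card - 1)

lemma mul_forestDensity_le_iff {X : Finset V} :
    n * forestDensity G X ≤ t ↔ n * (edgesWithin G X).card ≤ t * (X.card - 1) := by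
  obtain hX | hX := le_or_gt X.card 1
  · simp [forestDensity, edgesWithin_eq_empty_of_card_le_one hX]
  · have hpos : (0 : ℚ) < X.card - 1 := by simpa
    rw [forestDensity, ← mul_div_assoc, div_le_iff₀ hpos, ← Nat.cast_pred (by lia)]
    norm_cast

lemma card_edgesWithin_insert {v : V} {X : Finset V} [DecidableEq V] [DecidableRel G.Adj]
    (hv : v ∉ X) :
    (edgesWithin G (insert v X)).card =
      (edgesWithin G X).card + {w ∈ X | G.Adj v w}.card := by
  have hdisj : Disjoint (edgesWithin G X) ({w ∈ X | G.Adj v w}.image (s(v, ·))) := by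
    simp only [Finset.disjoint_right, Finset.forall_mem_image, mk_mem_edgesWithin]
    exact fun w _ hvw => hv hvw.2.1
  have hunion : edgesWithin G (insert v X) =
      edgesWithin G X ∪ {w ∈ X | G.Adj v w}.image (s(v, ·)) := by
    ext ⟨a, b⟩
    simp only [mk_mem_edgesWithin, Finset.mem_union, Finset.mem_image, Finset.mem_filter,
      Finset.mem_insert, Sym2.eq_iff]
    grind [G.adj_comm, G.irrefl]
  rw [hunion, Finset.card_union_of_disjoint hdisj,
    Finset.card_image_of_injective _ fun _ _ => Sym2.congr_right.1]

theorem hasForestCover_iff_forestDensity_le [Finite V] :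
    HasForestCover G n t ↔ ∀ X : Finset V, n * forestDensity G X ≤ t := by
  simp only [hasForestCover_iff_mul_card_edgesWithin_le, mul_forestDensity_le_iff]

end ForestDensity

section CompleteMultipartite

variable {G : SimpleGraph V}

lemma IsCompleteMultipartite'.isCompleteMultipartite (hG : IsCompleteMultipartite' G) :
    G.IsCompleteMultipartite := by
  obtain ⟨r, hr⟩ := hG
  exact ⟨fun u v w huv hvw => by
    rw [hr, not_not] at *
    exact r.trans huv hvw⟩

lemma card_edgesWithin_le_mul [DecidableRel G.Adj] (hG : G.IsCompleteMultipartite) (v : V)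
    (X : Finset V) :
    (edgesWithin G X).card ≤ {w ∈ X | G.Adj v w}.card * (X.card - 1) := by
  classical
  let star (u : V) : Finset (Sym2 V) := (X.erase u).image (s(u, ·))
  have hstar (u : V) (hu : u ∈ ({w ∈ X | G.Adj v w} : Finset V)) : (star u).card ≤ X.card - 1 :=
    Finset.card_image_le.trans_eq (Finset.card_erase_of_mem (Finset.mem_filter.1 hu).1)
  refine (Finset.card_le_card fun e he => ?_).trans (Finset.card_biUnion_le_card_mul _ star _ hstar)
  induction e with | _ a b
  obtain ⟨hab, ha, hb⟩ := mk_mem_edgesWithin.1 he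
  have hadj : G.Adj v a ∨ G.Adj v b := by
    by_contra! h
    exact hG.trans a v b (fun hav => h.1 hav.symm) h.2 hab
  simp only [star, Finset.mem_biUnion, Finset.mem_filter, Finset.mem_image, Finset.mem_erase]
  obtain hva | hvb := hadj
  · exact ⟨a, ⟨ha, hva⟩, b, ⟨hab.ne', hb⟩, rfl⟩
  · exact ⟨b, ⟨hb, hvb⟩, a, ⟨hab.ne, ha⟩, Sym2.eq_swap⟩

theorem monotone_forestDensity (hG : G.IsCompleteMultipartite) : Monotone (forestDensity G) := by
  classical
  refine Finset.monotone_iff_forall_le_insert.2 fun X v hv => ?_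
  rw [forestDensity, forestDensity, card_edgesWithin_insert hv, Finset.card_insert_of_notMem hv,
    Nat.cast_succ, add_sub_cancel_right]
  obtain hX | hX := le_or_gt X.card 1
  · rw [edgesWithin_eq_empty_of_card_le_one hX, Finset.card_empty, Nat.cast_zero, zero_div]
    positivity
  · have hpos : (0 : ℚ) < X.card - 1 := by simpa
    have hle : ((edgesWithin G X).card : ℚ) ≤ {w ∈ X | G.Adj v w}.card * (X.card - 1) := by
      rw [← Nat.cast_pred (by lia)]
      exact_mod_cast card_edgesWithin_le_mul hG v X
    rw [div_le_div_iff₀ hpos (by linarith)]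
    push_cast
    linarith

end CompleteMultipartite

/-- For a complete multipartite graph `Γ` and `n ≥ 1`, the minimum number of forests covering
the edges of the multigraph `n∗Γ` (each edge of `Γ` taken with multiplicity `n`; equivalently,
forests in `Γ` covering every edge at least `n` times) equals `⌈n·|E(Γ)|/(|V(Γ)|−1)⌉`. -/
theorem forest_cover_multigraph_completeMultipartite [Fintype V] (G : SimpleGraph V)
    (n : ℕ) (hn : 1 ≤ n) (hmul : IsCompleteMultipartite' G) :
    sInf {t : ℕ | ∃ F : Fin t → Set (Sym2 V),
        (∀ i, F i ⊆ G.edgeSet ∧ (SimpleGraph.fromEdgeSet (F i)).IsAcyclic) ∧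
        (∀ e ∈ G.edgeSet, n ≤ {i : Fin t | e ∈ F i}.ncard)} =
      ⌈((n * G.edgeSet.ncard : ℕ) : ℚ) / ((Fintype.card V : ℚ) - 1)⌉₊ := by
  have hmono : Monotone (forestDensity G) := monotone_forestDensity hmul.isCompleteMultipartite
  have hdensity : ((n * G.edgeSet.ncard : ℕ) : ℚ) / ((Fintype.card V : ℚ) - 1) =
      n * forestDensity G Finset.univ := by
    rw [forestDensity, Finset.card_univ, ← Set.ncard_coe_finset, coe_edgesWithin_univ,
      Nat.cast_mul, mul_div_assoc]
  have hcover (t : ℕ) : HasForestCover G n t ↔ n * forestDensity G Finset.univ ≤ t := by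
    refine hasForestCover_iff_forestDensity_le.trans ⟨fun h => h _, fun h X => h.trans' ?_⟩
    gcongr
    exact hmono (Finset.subset_univ X)
  calc sInf {t | HasForestCover G n t} = sInf (Set.Ici ⌈n * forestDensity G Finset.univ⌉₊) :=
        congrArg sInf (Set.ext fun t => (hcover t).trans Nat.ceil_le.symm)
    _ = ⌈n * forestDensity G Finset.univ⌉₊ := csInf_Ici
    _ = _ := by rw [hdensity]
end

section
/- For all m, n ≥ 3, 5 ≤ pmd(C_m □ C_n) ≤ 6, where C_k denotes the cycle on k vertices. -/
open SimpleGraph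

variable {V : Type*}

/-- A positive matching in a simple graph: a set `M` of pairwise disjoint edges of `G` together
with a vertex weighting `w` such that an edge `uv` of `G` satisfies `w u + w v > 0` iff the edge
belongs to `M`. -/
def IsPositiveMatching (G : SimpleGraph V) (M : Set (Sym2 V)) : Prop :=
  M ⊆ G.edgeSet ∧
  (∀ e ∈ M, ∀ f ∈ M, e ≠ f → ∀ v : V, v ∈ e → v ∉ f) ∧
  ∃ w : V → ℝ, ∀ u v : V, G.Adj u v → (0 < w u + w v ↔ s(u, v) ∈ M)

/-- A positive matching decomposition of `G` with parts `E 0, …, E (p-1)`: an ordered partition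
of the edge set of `G` such that each part is a positive matching of `G` minus the earlier
parts. -/
def IsPMD (G : SimpleGraph V) {p : ℕ} (E : Fin p → Set (Sym2 V)) : Prop :=
  (∀ i j : Fin p, i ≠ j → Disjoint (E i) (E j)) ∧
  (⋃ i, E i) = G.edgeSet ∧
  ∀ i : Fin p, IsPositiveMatching (G.deleteEdges (⋃ j : Fin p, ⋃ (_ : j < i), E j)) (E i)

/-- The minimum number of parts in a positive matching decomposition of `G`. -/
noncomputable def pmd (G : SimpleGraph V) : ℕ :=
  sInf {p : ℕ | ∃ E : Fin p → Set (Sym2 V), IsPMD G E}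

/-!
Lower bound: in a finite graph without pendant or isolated vertices a positive matching misses some
vertex, since the partner of a vertex of least weight would have all its edges positive. A vertex
missed by the first part has its edges in distinct later parts.

Upper bound: a sequence of integer weightings sorts the edges by the first weighting positive on
them, and this is a positive matching decomposition as soon as each class is a matching. Cut both
cycles into blocks of lengths 3, 4 and 5, each a closed walk through `0` in one digraph on five
symbols. Weights that depend only on the pair of symbols at a vertex then have to be checked on
finitely many local configurations, the same for all `m` and `n`.
-/

section LowerBound

variable {G : SimpleGraph V}

theorem IsPositiveMatching.eq_of_mem_of_mem {M : Set (Sym2 V)} (hM : IsPositiveMatching G M)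
    {u v v' : V} (h : s(u, v) ∈ M) (h' : s(u, v') ∈ M) : v = v' := by
  by_contra hne
  exact hM.2.1 _ h _ h' (fun he => hne (Sym2.congr_right.1 he)) u (Sym2.mem_mk_left u v)
    (Sym2.mem_mk_left u v')

theorem IsPositiveMatching.exists_forall_notMem [Finite V] [Nonempty V] [G.LocallyFinite]
    {M : Set (Sym2 V)} (hM : IsPositiveMatching G M) (hG : ∀ v, 2 ≤ G.degree v) :
    ∃ v, ∀ u, s(u, v) ∉ M := by
  obtain ⟨w, hw⟩ := hM.2.2
  obtain ⟨v, hv⟩ := Finite.exists_min w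
  refine ⟨v, fun u huv => ?_⟩
  obtain ⟨x, hx, hxv⟩ := Finset.exists_mem_ne (hG u) v
  have hux : G.Adj u x := (G.mem_neighborFinset u x).1 hx
  have hpos : 0 < w u + w v := (hw u v (hM.1 huv)).2 huv
  have hxM : s(u, x) ∈ M := (hw u x hux).1 (by linarith [hv x])
  exact hxv (hM.eq_of_mem_of_mem hxM huv)

theorem IsPMD.isPositiveMatching_zero {p : ℕ} {E : Fin (p + 1) → Set (Sym2 V)}
    (hE : IsPMD G E) : IsPositiveMatching G (E 0) := by
  simpa using hE.2.2 0

theorem IsPMD.exists_mem {p : ℕ} {E : Fin p → Set (Sym2 V)} (hE : IsPMD G E) {u v : V}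
    (h : G.Adj u v) : ∃ i, s(u, v) ∈ E i := by
  rw [← mem_edgeSet, ← hE.2.1] at h
  exact Set.mem_iUnion.1 h

theorem IsPMD.exists_degree_lt [Finite V] [Nonempty V] [G.LocallyFinite] {p : ℕ}
    {E : Fin p → Set (Sym2 V)} (hE : IsPMD G E) (hG : ∀ v, 2 ≤ G.degree v) :
    ∃ v, G.degree v < p := by
  obtain _ | p := p
  · obtain ⟨v⟩ := ‹Nonempty V›
    obtain ⟨u, hu⟩ := (G.degree_pos_iff_exists_adj v).1 (by linarith [hG v])
    exact (hE.exists_mem hu).choose.elim0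
  · obtain ⟨v, hv⟩ := hE.isPositiveMatching_zero.exists_forall_notMem hG
    have hlater : ∀ u ∈ G.neighborFinset v, ∃ i, i ∈ Finset.univ.erase 0 ∧ s(v, u) ∈ E i := by
      intro u hu
      obtain ⟨i, hi⟩ := hE.exists_mem ((G.mem_neighborFinset v u).1 hu)
      refine ⟨i, Finset.mem_erase.2 ⟨?_, Finset.mem_univ i⟩, hi⟩
      rintro rfl
      exact hv u (Sym2.eq_swap ▸ hi)
    have hcard := Finset.card_le_card_of_forall_subsingleton _ hlater fun i _ _ hu _ hu' =>
      (hE.2.2 i).eq_of_mem_of_mem hu.2 hu'.2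
    rw [Finset.card_erase_of_mem (Finset.mem_univ 0), Finset.card_fin] at hcard
    exact ⟨v, Nat.lt_succ_of_le hcard⟩

end LowerBound

section Weightings

variable {p : ℕ} {w : Fin p → V → ℤ} {k l : Fin p} {u v : V}

/-- Weighting number `k` is the first in the sequence `w` that is positive on the pair `u`, `v`. -/
def IsFirstPositive (w : Fin p → V → ℤ) (k : Fin p) (u v : V) : Prop :=
  0 < w k u + w k v ∧ ∀ j < k, w j u + w j v ≤ 0

instance : Decidable (IsFirstPositive w k u v) :=
  inferInstanceAs (Decidable (_ ∧ _))

theorem isFirstPositive_iff_isLeast :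
    IsFirstPositive w k u v ↔ IsLeast {j | 0 < w j u + w j v} k := by
  refine and_congr_right fun _ => forall_congr' fun j => ?_
  rw [← not_lt, ← not_lt]
  exact imp_not_comm

theorem IsFirstPositive.symm (h : IsFirstPositive w k u v) : IsFirstPositive w k v u := by
  simpa only [IsFirstPositive, add_comm] using h

theorem IsFirstPositive.unique (hk : IsFirstPositive w k u v) (hl : IsFirstPositive w l u v) :
    k = l :=
  (isFirstPositive_iff_isLeast.1 hk).unique (isFirstPositive_iff_isLeast.1 hl)

theorem exists_isFirstPositive (h : ∃ k, 0 < w k u + w k v) : ∃ k, IsFirstPositive w k u v := by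
  obtain ⟨k, hk⟩ := exists_minimal_of_wellFoundedLT (· ∈ {j | 0 < w j u + w j v}) h
  exact ⟨k, isFirstPositive_iff_isLeast.2 (minimal_iff_isLeast.1 hk)⟩

/-- The subgraph of `G` formed by the edges on which the weighting `w k` is positive and all earlier
ones are not. Its edge set is the `k`-th part of the decomposition defined by `w`. -/
def firstPositiveGraph (G : SimpleGraph V) (w : Fin p → V → ℤ) (k : Fin p) : SimpleGraph V where
  Adj u v := G.Adj u v ∧ IsFirstPositive w k u v
  symm := ⟨fun _ _ h => ⟨h.1.symm, h.2.symm⟩⟩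
  loopless := ⟨fun _ h => h.1.ne rfl⟩

variable {G : SimpleGraph V}

theorem disjoint_edgeSet_firstPositiveGraph (hkl : k ≠ l) :
    Disjoint (firstPositiveGraph G w k).edgeSet (firstPositiveGraph G w l).edgeSet := by
  rw [disjoint_edgeSet, disjoint_left]
  exact fun u v hk hl => hkl (hk.2.unique hl.2)

theorem iUnion_edgeSet_firstPositiveGraph
    (hw : ∀ u v, G.Adj u v → ∃ k, 0 < w k u + w k v) :
    ⋃ k, (firstPositiveGraph G w k).edgeSet = G.edgeSet := by
  refine Set.Subset.antisymm (Set.iUnion_subset fun k => edgeSet_mono fun _ _ h => h.1) ?_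
  rintro ⟨u, v⟩ huv
  obtain ⟨k, hk⟩ := exists_isFirstPositive (hw u v huv)
  exact Set.mem_iUnion.2 ⟨k, huv, hk⟩

theorem adj_deleteEdges_earlier_iff :
    (G.deleteEdges (⋃ j, ⋃ (_ : j < k), (firstPositiveGraph G w j).edgeSet)).Adj u v ↔
      G.Adj u v ∧ ∀ j < k, w j u + w j v ≤ 0 := by
  simp only [deleteEdges_adj, Set.mem_iUnion, mem_edgeSet, exists_prop, not_exists, not_and]
  refine and_congr_right fun huv => ⟨fun h j hj => ?_, fun h j hj hj' => ?_⟩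
  · by_contra! hpos
    obtain ⟨l, hl⟩ := exists_isFirstPositive ⟨j, hpos⟩
    have hlj : l ≤ j := (isFirstPositive_iff_isLeast.1 hl).2 hpos
    exact h l (hlj.trans_lt hj) ⟨huv, hl⟩
  · exact (h j hj).not_gt hj'.2.1

theorem isPMD_edgeSet_firstPositiveGraph
    (hw : ∀ u v, G.Adj u v → ∃ k, 0 < w k u + w k v)
    (hmatch : ∀ k u, ((firstPositiveGraph G w k).neighborSet u).Subsingleton) :
    IsPMD G fun k => (firstPositiveGraph G w k).edgeSet := by
  refine ⟨fun _ _ => disjoint_edgeSet_firstPositiveGraph, iUnion_edgeSet_firstPositiveGraph hw,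
    fun k => ⟨?_, ?_, fun v => w k v, fun u v huv => ?_⟩⟩
  · exact edgeSet_mono fun u v h => adj_deleteEdges_earlier_iff.2 ⟨h.1, h.2.2⟩
  · intro e he f hf hef v hve hvf
    obtain ⟨a, rfl⟩ := Sym2.mem_iff_exists.1 hve
    obtain ⟨b, rfl⟩ := Sym2.mem_iff_exists.1 hvf
    exact hef (congrArg (s(v, ·)) (hmatch k v he hf))
  · obtain ⟨huv, hearlier⟩ := adj_deleteEdges_earlier_iff.1 huv
    calc (0 : ℝ) < w k u + w k v ↔ 0 < w k u + w k v := by exact_mod_cast Iff.rfl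
      _ ↔ s(u, v) ∈ (firstPositiveGraph G w k).edgeSet :=
        ⟨fun h => ⟨huv, h, hearlier⟩, fun h => h.2.1⟩

end Weightings

section Torus

variable {S : Type*} {D : S → S → Prop} {p m n : ℕ}

theorem cycleGraph_adj_iff_eq_sub_or_eq_add {u v : Fin (n + 2)} :
    (cycleGraph (n + 2)).Adj u v ↔ v = u - 1 ∨ v = u + 1 := by
  rw [← mem_neighborSet, cycleGraph_neighborSet, Set.mem_insert_iff, Set.mem_singleton_iff]

theorem arc_or_arc_of_cycleGraph_adj {f : Fin (n + 2) → S} (hf : ∀ i, D (f i) (f (i + 1)))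
    {u v : Fin (n + 2)} (h : (cycleGraph (n + 2)).Adj u v) :
    D (f u) (f v) ∨ D (f v) (f u) := by
  obtain rfl | rfl := cycleGraph_adj_iff_eq_sub_or_eq_add.1 h
  · exact .inr (by simpa using hf (u - 1))
  · exact .inl (hf u)

theorem path_or_path_of_cycleGraph_adj {f : Fin (n + 2) → S} (hf : ∀ i, D (f i) (f (i + 1)))
    {u v v' : Fin (n + 2)} (h : (cycleGraph (n + 2)).Adj u v)
    (h' : (cycleGraph (n + 2)).Adj u v') (hne : v ≠ v') :
    D (f v) (f u) ∧ D (f u) (f v') ∨ D (f v') (f u) ∧ D (f u) (f v) := by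
  have hpred : D (f (u - 1)) (f u) := by simpa using hf (u - 1)
  obtain rfl | rfl := cycleGraph_adj_iff_eq_sub_or_eq_add.1 h <;>
    obtain rfl | rfl := cycleGraph_adj_iff_eq_sub_or_eq_add.1 h'
  · exact absurd rfl hne
  · exact .inl ⟨hpred, hf u⟩
  · exact .inr ⟨hpred, hf u⟩
  · exact absurd rfl hne

/-- Weightings of pairs of symbols that, pulled back along closed walks `f` and `g` of the digraph
`D`, decompose the product of two cycles: the last three fields exclude two edges of the same class
at a vertex, when both are in the first direction, both in the second, or one in each. -/
structure IsTorusPattern (D : S → S → Prop) (w : Fin p → S × S → ℤ) : Prop where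
  exists_pos : ∀ x y, ∃ k, 0 < w k x + w k y
  fst : ∀ a b c, D a b → D b c → ∀ t k,
    IsFirstPositive w k (b, t) (a, t) → ¬ IsFirstPositive w k (b, t) (c, t)
  snd : ∀ a b c, D a b → D b c → ∀ t k,
    IsFirstPositive w k (t, b) (t, a) → ¬ IsFirstPositive w k (t, b) (t, c)
  corner : ∀ a b c d, D a b ∨ D b a → D c d ∨ D d c → ∀ k,
    IsFirstPositive w k (a, c) (b, c) → ¬ IsFirstPositive w k (a, c) (a, d)

theorem IsTorusPattern.isPMD {w : Fin p → S × S → ℤ} (hw : IsTorusPattern D w)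
    {f : Fin (m + 2) → S} (hf : ∀ i, D (f i) (f (i + 1)))
    {g : Fin (n + 2) → S} (hg : ∀ i, D (g i) (g (i + 1))) :
    IsPMD (cycleGraph (m + 2) □ cycleGraph (n + 2)) fun k => (firstPositiveGraph
      (cycleGraph (m + 2) □ cycleGraph (n + 2)) (fun k => w k ∘ Prod.map f g) k).edgeSet := by
  refine isPMD_edgeSet_firstPositiveGraph (fun x y _ => hw.exists_pos _ _) ?_
  rintro k ⟨a, b⟩ ⟨c, d⟩ ⟨hadj, hpos⟩ ⟨c', d'⟩ ⟨hadj', hpos'⟩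
  change IsFirstPositive w k (f a, g b) (f c, g d) at hpos
  change IsFirstPositive w k (f a, g b) (f c', g d') at hpos'
  obtain ⟨h, rfl : b = d⟩ | ⟨h, rfl : a = c⟩ := boxProd_adj.1 hadj <;>
    obtain ⟨h', rfl : b = d'⟩ | ⟨h', rfl : a = c'⟩ := boxProd_adj.1 hadj'
  · by_contra hne
    obtain ⟨hD, hD'⟩ | ⟨hD, hD'⟩ :=
      path_or_path_of_cycleGraph_adj hf h h' (mt (congrArg (·, b)) hne)
    · exact hw.fst _ _ _ hD hD' _ _ hpos hpos'
    · exact hw.fst _ _ _ hD hD' _ _ hpos' hpos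
  · exact absurd hpos' (hw.corner _ _ _ _ (arc_or_arc_of_cycleGraph_adj hf h)
      (arc_or_arc_of_cycleGraph_adj hg h') _ hpos)
  · exact absurd hpos (hw.corner _ _ _ _ (arc_or_arc_of_cycleGraph_adj hf h')
      (arc_or_arc_of_cycleGraph_adj hg h) _ hpos')
  · by_contra hne
    obtain ⟨hD, hD'⟩ | ⟨hD, hD'⟩ :=
      path_or_path_of_cycleGraph_adj hg h h' (mt (congrArg (a, ·)) hne)
    · exact hw.snd _ _ _ hD hD' _ _ hpos hpos'
    · exact hw.snd _ _ _ hD hD' _ _ hpos' hpos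

theorem isRegularOfDegree_cycleGraph_boxProd_cycleGraph :
    (cycleGraph (m + 3) □ cycleGraph (n + 3)).IsRegularOfDegree 4 := fun x => by
  rw [degree_boxProd, cycleGraph_degree_three_le, cycleGraph_degree_three_le]

end Torus

section Blocks

/-- The arcs `0 → 1 → 2 → 3 → 4` and `2, 3, 4 → 0`. A closed walk through `0` is a concatenation of
the blocks `012`, `0123` and `01234`. -/
def IsBlockArc (a b : Fin 5) : Prop :=
  (a : ℕ) + 1 = b ∨ 2 ≤ (a : ℕ) ∧ (b : ℕ) = 0

instance : DecidableRel IsBlockArc := fun a b =>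
  inferInstanceAs (Decidable ((a : ℕ) + 1 = b ∨ 2 ≤ (a : ℕ) ∧ (b : ℕ) = 0))

/-- The symbols along a cycle of length `n` cut into blocks `012`, of which the last one is
lengthened to `0123` or `01234` when `n` is not divisible by 3. -/
def blockSymbol {n : ℕ} (i : Fin n) : Fin 5 :=
  if (i : ℕ) < 3 * (n / 3) then ⟨i % 3, by omega⟩ else ⟨3 + (i - 3 * (n / 3)), by omega⟩

theorem isBlockArc_blockSymbol {n : ℕ} (i : Fin (n + 3)) :
    IsBlockArc (blockSymbol i) (blockSymbol (i + 1)) := by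
  have hsucc : ((i + 1 : Fin (n + 3)) : ℕ) = if (i : ℕ) + 1 = n + 3 then 0 else (i : ℕ) + 1 := by
    simp only [Fin.val_add_one, Fin.ext_iff, Fin.val_last, Nat.add_right_cancel_iff]
  unfold IsBlockArc blockSymbol
  split_ifs at hsucc ⊢ <;> simp only <;> omega

/-- Six weightings of the pairs of symbols, as matrices. The entries of the first five were
found by a computer search for a torus pattern; the last one collects all remaining edges. -/
def blockWeight : Fin 6 → Fin 5 × Fin 5 → ℤ := fun k x =>
  (![!![ 3, -3, -3, -3, -3;
        -3, -1,  0,  1, -2;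
        -2,  1,  0, -1,  2;
        -1, -1,  0,  1, -2;
        -2,  1,  0, -1,  2],
     !![ 0, -2,  1,  0, -1;
        -3,  3, -3,  0,  1;
         2, -3, -1,  0, -1;
        -2,  2, -1,  0,  1;
         3, -3, -3, -3, -3],
     !![-2,  1, -1,  0,  1;
         2, -3, -1,  0, -1;
        -3,  3,  1,  0, -1;
         2, -2, -1,  0, -1;
         0,  0,  1,  0, -1],
     !![ 2, -2,  1, -1, -1;
        -2,  2, -1,  1,  1;
         3, -3,  0,  0,  0;
        -3,  3,  0,  0,  0;
        -1,  0,  0,  1,  1],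
     !![ 0,  1, -1, -1, -1;
         0,  1,  2,  2,  2;
         2, -1, -2,  0,  0;
        -2,  3,  3,  1,  1;
         0,  0, -3,  1,  1],
     fun _ _ => 1] : Fin 6 → Matrix (Fin 5) (Fin 5) ℤ) k x.1 x.2

theorem isTorusPattern_blockWeight : IsTorusPattern IsBlockArc blockWeight where
  exists_pos _ _ := ⟨5, show (0 : ℤ) < 1 + 1 by norm_num⟩
  fst := by decide +kernel
  snd := by decide +kernel
  corner := by decide +kernel

end Blocks

/-- For all `m, n ≥ 3`, `5 ≤ pmd(Cₘ □ Cₙ) ≤ 6`. -/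
theorem pmd_cycle_boxProd_cycle (m n : ℕ) (hm : 3 ≤ m) (hn : 3 ≤ n) :
    5 ≤ pmd (cycleGraph m □ cycleGraph n) ∧ pmd (cycleGraph m □ cycleGraph n) ≤ 6 := by
  obtain ⟨m, rfl⟩ := Nat.exists_eq_add_of_le' hm
  obtain ⟨n, rfl⟩ := Nat.exists_eq_add_of_le' hn
  have hsix : 6 ∈ {p : ℕ | ∃ E : Fin p → Set (Sym2 (Fin (m + 3) × Fin (n + 3))),
      IsPMD (cycleGraph (m + 3) □ cycleGraph (n + 3)) E} :=
    ⟨_, isTorusPattern_blockWeight.isPMD isBlockArc_blockSymbol isBlockArc_blockSymbol⟩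
  refine ⟨?_, Nat.sInf_le hsix⟩
  obtain ⟨E, hE⟩ := Nat.sInf_mem ⟨6, hsix⟩
  have hdeg := isRegularOfDegree_cycleGraph_boxProd_cycleGraph (m := m) (n := n)
  obtain ⟨v, hv⟩ := hE.exists_degree_lt fun v => (hdeg v).symm ▸ (by norm_num : 2 ≤ 4)
  rwa [hdeg v] at hv
end
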